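/- Let N be a positive integer, δ₀ ∈ (0,1), and 0 < s < t < 1 with t − s ≥ δ₀. Let B denote the unit ball of ℝ^N, and set c₁ = (1−t)·P_t(B)/|B|^{(N−t)/N} and c₂ = s·P_s(B)/|B|^{(N−s)/N}. Then there exists c₀ > 0, depending only on N and δ₀, such that for every m > 0: −c₀·m ≤ φ(m) ≤ c₁·m^{(N−t)/N}·(1 − (c₂/c₁)·m^{(t−s)/N}). -/

import Mathlib

open MeasureTheory ENNReal

/-- Interaction energy `∫_A ∫_B |x-y|^{-(N+α)} dy dx` in `[0,∞]`. -/
noncomputable def interEnergy (N : ℕ) (α : ℝ)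
    (A B : Set (EuclideanSpace ℝ (Fin N))) : ℝ≥0∞ :=
  ∫⁻ x in A, ∫⁻ y in B, ENNReal.ofReal (‖x - y‖ ^ (-((N : ℝ) + α))) ∂volume ∂volume

/-- The fractional `α`-perimeter `P_α(E) = ∫_E ∫_{Eᶜ} |x-y|^{-(N+α)} dy dx`. -/
noncomputable def fracPer (N : ℕ) (α : ℝ) (E : Set (EuclideanSpace ℝ (Fin N))) : ℝ≥0∞ :=
  interEnergy N α E Eᶜ

/-- The free energy `F_{s,t}(E) = (1-t) P_t(E) - s P_s(E)`. -/
noncomputable def freeEnergy (N : ℕ) (s t : ℝ) (E : Set (EuclideanSpace ℝ (Fin N))) : ℝ :=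
  (1 - t) * (fracPer N t E).toReal - s * (fracPer N s E).toReal

/-- The isovolumetric function `φ(m) = inf { F_{s,t}(E) : |E| = m, P_t(E) < ∞ }`. -/
noncomputable def isoFn (N : ℕ) (s t m : ℝ) : ℝ :=
  sInf {x : ℝ | ∃ E : Set (EuclideanSpace ℝ (Fin N)), MeasurableSet E ∧
    volume E = ENNReal.ofReal m ∧ fracPer N t E < ⊤ ∧ x = freeEnergy N s t E}

/-!
Writing `D(h) = |E \ (E - h)|`, Fubini gives `P_α(E) = ∫ |h|^{-(N+α)} D(h) dh`.

Lower bound. For `|h| ≥ ρ` use `D ≤ |E|`: since `∫_{|h| ≥ ρ} |h|^{-(N+s)} dh = N |B| ρ^{-s} / s`,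
the factor `s` in front of `P_s` keeps this part below `N |B| |E| / ρ`. For `|h| < ρ` use
`D(2h) ≤ 2 D(h)`. Integrating `D` against `|h|^{-(N+t)} ((2ρ)^{t-s} - |h|^{t-s})₊` and substituting
`h ↦ 2h` gives
`(2^{1-s} - 1) ∫_{|h| < ρ} |h|^{-(N+s)} D ≤ (2^{1-t} - 1) (2ρ)^{t-s} ∫_{|h| < ρ} |h|^{-(N+t)} D`.
As `2^{1-t} - 1 ≤ 1 - t` and `2^{1-s} - 1 ≥ (1 - s) / 2 ≥ δ₀ / 2`, the choice `(2ρ)^{δ₀} = δ₀ / 2`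
bounds the near part of `P_s` by that of `(1 - t) P_t`, uniformly as `t → 1`.

Upper bound. The ball of volume `m` is a competitor, of finite `t`-perimeter because
`D(h) = O(|h|)`, and `P_α` is homogeneous of degree `N - α`.
-/

section TranslationDefect

variable {G : Type*} [MeasurableSpace G]

/-- The measure of the points of `A` that leave `A` under the translation by `h`. -/
noncomputable def translationDefect [Add G] (μ : Measure G) (A : Set G) (h : G) : ℝ≥0∞ :=
  μ (A \ (· + h) ⁻¹' A)

theorem translationDefect_le_measure [Add G] (μ : Measure G) (A : Set G) (h : G) :
    translationDefect μ A h ≤ μ A :=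
  measure_mono Set.sdiff_subset

theorem translationDefect_add_le [AddGroup G] [MeasurableAdd G] (μ : Measure G)
    [μ.IsAddRightInvariant] (A : Set G) (h k : G) :
    translationDefect μ A (h + k) ≤ translationDefect μ A h + translationDefect μ A k := by
  have hsub : A \ (· + (h + k)) ⁻¹' A ⊆
      (A \ (· + h) ⁻¹' A) ∪ (· + h) ⁻¹' (A \ (· + k) ⁻¹' A) := by
    rintro x ⟨hx, hxhk⟩
    by_cases hxh : x + h ∈ A
    · exact .inr ⟨hxh, by simpa only [Set.mem_preimage, add_assoc] using hxhk⟩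
    · exact .inl ⟨hx, hxh⟩
  calc translationDefect μ A (h + k)
      ≤ μ (A \ (· + h) ⁻¹' A) + μ ((· + h) ⁻¹' (A \ (· + k) ⁻¹' A)) :=
        (measure_mono hsub).trans (measure_union_le _ _)
    _ = translationDefect μ A h + translationDefect μ A k := by
        rw [measure_preimage_add_right]; rfl

theorem measurableSet_mem_and_add_notMem [Add G] [MeasurableAdd₂ G] {A : Set G}
    (hA : MeasurableSet A) : MeasurableSet {p : G × G | p.1 ∈ A ∧ p.1 + p.2 ∉ A} :=
  (measurable_fst hA).inter (measurable_add hA).compl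

theorem measurable_translationDefect [Add G] [MeasurableAdd₂ G] (μ : Measure G) [SFinite μ]
    {A : Set G} (hA : MeasurableSet A) : Measurable (translationDefect μ A) :=
  measurable_measure_prodMk_right (measurableSet_mem_and_add_notMem hA)

theorem setLIntegral_compl_sub_eq_lintegral_mul_translationDefect [AddGroup G] [MeasurableAdd₂ G]
    (μ : Measure G) [SFinite μ] [μ.IsAddLeftInvariant] {f : G → ℝ≥0∞} (hf : Measurable f)
    {A : Set G} (hA : MeasurableSet A) :
    ∫⁻ x in A, ∫⁻ y in Aᶜ, f (-x + y) ∂μ ∂μ = ∫⁻ h, f h * translationDefect μ A h ∂μ := by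
  set T : Set (G × G) := {p | p.1 ∈ A ∧ p.1 + p.2 ∉ A}
  have hT : MeasurableSet T := measurableSet_mem_and_add_notMem hA
  have hinner (x : G) : A.indicator (fun x ↦ ∫⁻ y in Aᶜ, f (-x + y) ∂μ) x =
      ∫⁻ h, T.indicator (fun p ↦ f p.2) (x, h) ∂μ := by
    by_cases hx : x ∈ A
    · have hpre : MeasurableSet ((x + ·) ⁻¹' Aᶜ) := measurable_const_add x hA.compl
      rw [Set.indicator_of_mem hx, ← (measurePreserving_add_left μ x).setLIntegral_comp_preimage_emb
        (MeasurableEquiv.addLeft x).measurableEmbedding, ← lintegral_indicator hpre]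
      refine lintegral_congr fun h ↦ ?_
      by_cases hxh : x + h ∈ A <;> simp [T, hx, hxh]
    · simp [T, Set.indicator, hx]
  have houter (h : G) : ∫⁻ x, T.indicator (fun p ↦ f p.2) (x, h) ∂μ =
      f h * translationDefect μ A h :=
    lintegral_indicator_const (measurable_prodMk_right hT) (f h)
  rw [← lintegral_indicator hA]
  simp_rw [hinner]
  rw [lintegral_lintegral_swap (f := fun x h ↦ T.indicator (fun p ↦ f p.2) (x, h))
    ((hf.comp measurable_snd).indicator hT).aemeasurable]
  exact lintegral_congr houter

end TranslationDefect

section FracKernel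

open Module

variable {E : Type*} [NormedAddCommGroup E] [NormedSpace ℝ E]

/-- The kernel `|h|^{-(d + α)}` of the fractional `α`-perimeter in dimension `d`. For `d + α ≠ 0`
its value at the origin is `0` rather than `∞`. -/
noncomputable def fracKernel (α : ℝ) (h : E) : ℝ≥0∞ :=
  ENNReal.ofReal (‖h‖ ^ (-((finrank ℝ E : ℝ) + α)))

theorem fracKernel_smul (α : ℝ) {r : ℝ} (hr : 0 < r) (h : E) :
    fracKernel α (r • h) =
      ENNReal.ofReal (r ^ (-((finrank ℝ E : ℝ) + α))) * fracKernel α h := by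
  rw [fracKernel, norm_smul, Real.norm_of_nonneg hr.le, Real.mul_rpow hr.le (norm_nonneg _),
    ENNReal.ofReal_mul (by positivity), fracKernel]

theorem fracKernel_eq_rpow_norm_mul {s t : ℝ} (hs : 0 < (finrank ℝ E : ℝ) + s)
    (ht : 0 < (finrank ℝ E : ℝ) + t) (h : E) :
    fracKernel s h = ENNReal.ofReal (‖h‖ ^ (t - s)) * fracKernel t h := by
  rw [fracKernel, fracKernel, ← ENNReal.ofReal_mul (by positivity)]
  rcases eq_or_ne h 0 with rfl | hh
  · rw [norm_zero, Real.zero_rpow (neg_ne_zero.2 hs.ne'), Real.zero_rpow (neg_ne_zero.2 ht.ne'),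
      mul_zero]
  · rw [← Real.rpow_add (norm_pos_iff.2 hh)]
    ring_nf

/-- The kernel `|h|^{-(d + t)} (c^δ - |h|^δ)₊`, where `ENNReal.ofReal` provides the positive part.
It compares `fracKernel t` with `fracKernel (t - δ)` on the ball of radius `c`. -/
noncomputable def truncKernel (t δ c : ℝ) (h : E) : ℝ≥0∞ :=
  fracKernel t h * ENNReal.ofReal (c ^ δ - ‖h‖ ^ δ)

theorem truncKernel_smul (t δ : ℝ) {c : ℝ} (hc : 0 ≤ c) {r : ℝ} (hr : 0 < r) (h : E) :
    truncKernel t δ (r * c) (r • h) =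
      ENNReal.ofReal (r ^ (δ - ((finrank ℝ E : ℝ) + t))) * truncKernel t δ c h := by
  rw [truncKernel, fracKernel_smul t hr, norm_smul, Real.norm_of_nonneg hr.le,
    Real.mul_rpow hr.le hc, Real.mul_rpow hr.le (norm_nonneg _), ← mul_sub,
    ENNReal.ofReal_mul (by positivity), mul_mul_mul_comm, ← ENNReal.ofReal_mul (by positivity),
    ← Real.rpow_add hr, truncKernel, neg_add_eq_sub]

theorem truncKernel_eq_zero (t : ℝ) {δ : ℝ} (hδ : 0 ≤ δ) {c : ℝ} (hc : 0 ≤ c) {h : E}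
    (hch : c ≤ ‖h‖) : truncKernel t δ c h = 0 := by
  have hle : c ^ δ ≤ ‖h‖ ^ δ := Real.rpow_le_rpow hc hch hδ
  rw [truncKernel, ENNReal.ofReal_of_nonpos (by linarith), mul_zero]

theorem truncKernel_add_fracKernel {s : ℝ} (hs : 0 < s) {t : ℝ} (hst : s ≤ t) {c : ℝ} {h : E}
    (hhc : ‖h‖ ≤ c) :
    truncKernel t (t - s) c h + fracKernel s h =
      ENNReal.ofReal (c ^ (t - s)) * fracKernel t h := by
  have hle : ‖h‖ ^ (t - s) ≤ c ^ (t - s) :=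
    Real.rpow_le_rpow (norm_nonneg h) hhc (sub_nonneg.2 hst)
  have ht : 0 < t := hs.trans_le hst
  rw [truncKernel, fracKernel_eq_rpow_norm_mul (s := s) (t := t) (by positivity) (by positivity),
    mul_comm (fracKernel t h),
    ← add_mul, ← ENNReal.ofReal_add (sub_nonneg.2 hle) (by positivity), sub_add_cancel]

@[fun_prop]
theorem measurable_fracKernel [MeasurableSpace E] [BorelSpace E] (α : ℝ) :
    Measurable (fracKernel α : E → ℝ≥0∞) := by
  unfold fracKernel; fun_prop

@[fun_prop]
theorem measurable_truncKernel [MeasurableSpace E] [BorelSpace E] (t δ c : ℝ) :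
    Measurable (truncKernel t δ c : E → ℝ≥0∞) := by
  unfold truncKernel; fun_prop

end FracKernel

section ShiftEnergy

open Metric Module
open scoped Pointwise

variable {E : Type*} [NormedAddCommGroup E] [MeasurableSpace E]

theorem translationDefect_eq_measure_of_subset_ball (μ : Measure E) {A : Set E} {r : ℝ}
    (hA : A ⊆ ball 0 r) {h : E} (hh : 2 * r ≤ ‖h‖) : translationDefect μ A h = μ A := by
  have hdisj : Disjoint A ((· + h) ⁻¹' A) := by
    refine Set.disjoint_left.2 fun x hx hxh ↦ ?_
    have hx' : ‖x‖ < r := mem_ball_zero_iff.1 (hA hx)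
    have hxh' : ‖x + h‖ < r := mem_ball_zero_iff.1 (hA hxh)
    have : ‖h‖ ≤ ‖x + h‖ + ‖x‖ := by simpa using norm_sub_le (x + h) x
    linarith
  rw [translationDefect, hdisj.sdiff_eq_left]

variable [NormedSpace ℝ E]

/-- The part of the fractional `α`-perimeter of `A` due to the pairs `(x, x + h)` with `h ∈ S`. -/
noncomputable def shiftEnergy (μ : Measure E) (α : ℝ) (A S : Set E) : ℝ≥0∞ :=
  ∫⁻ h in S, fracKernel α h * translationDefect μ A h ∂μ

theorem shiftEnergy_mono_set (μ : Measure E) (α : ℝ) (A : Set E) {S T : Set E} (hST : S ⊆ T) :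
    shiftEnergy μ α A S ≤ shiftEnergy μ α A T :=
  lintegral_mono_set hST

theorem shiftEnergy_add_compl (μ : Measure E) (α : ℝ) (A : Set E) {S : Set E}
    (hS : MeasurableSet S) :
    shiftEnergy μ α A S + shiftEnergy μ α A Sᶜ = shiftEnergy μ α A Set.univ := by
  rw [shiftEnergy, shiftEnergy, lintegral_add_compl _ hS, shiftEnergy, setLIntegral_univ]

variable [BorelSpace E] [FiniteDimensional ℝ E] (μ : Measure E) [μ.IsAddHaarMeasure]

theorem lintegral_eq_mul_lintegral_comp_smul (f : E → ℝ≥0∞) {r : ℝ} (hr : 0 < r) :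
    ∫⁻ x, f x ∂μ = ENNReal.ofReal (r ^ finrank ℝ E) * ∫⁻ x, f (r • x) ∂μ := by
  have hmap : ∫⁻ x, f (r • x) ∂μ = ∫⁻ x, f x ∂(μ.map (r • ·)) :=
    ((MeasurableEquiv.smul₀ r hr.ne').measurableEmbedding.lintegral_map f).symm
  rw [hmap, Measure.map_addHaar_smul μ hr.ne', lintegral_smul_measure, smul_eq_mul, ← mul_assoc,
    abs_of_pos (by positivity), ← ENNReal.ofReal_mul (by positivity),
    mul_inv_cancel₀ (by positivity), ENNReal.ofReal_one, one_mul]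

theorem translationDefect_smul (A : Set E) {r : ℝ} (hr : 0 < r) (h : E) :
    translationDefect μ (r • A) (r • h) =
      ENNReal.ofReal (r ^ finrank ℝ E) * translationDefect μ A h := by
  have hset : r • A \ (· + r • h) ⁻¹' (r • A) = r • (A \ (· + h) ⁻¹' A) := by
    rw [Set.smul_set_sdiff₀ hr.ne']
    congr 1
    ext x
    simp [Set.mem_smul_set_iff_inv_smul_mem₀ hr.ne', smul_smul, inv_mul_cancel₀ hr.ne']
  rw [translationDefect, hset, Measure.addHaar_smul_of_nonneg μ hr.le, translationDefect]

theorem shiftEnergy_smul_univ (α : ℝ) {A : Set E} (hA : MeasurableSet A) {r : ℝ} (hr : 0 < r) :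
    shiftEnergy μ α (r • A) Set.univ =
      ENNReal.ofReal (r ^ ((finrank ℝ E : ℝ) - α)) * shiftEnergy μ α A Set.univ := by
  have hpow : r ^ finrank ℝ E * (r ^ (-((finrank ℝ E : ℝ) + α)) * r ^ finrank ℝ E) =
      r ^ ((finrank ℝ E : ℝ) - α) := by
    rw [← Real.rpow_natCast, ← Real.rpow_add hr, ← Real.rpow_add hr]
    ring_nf
  calc shiftEnergy μ α (r • A) Set.univ
      = ENNReal.ofReal (r ^ finrank ℝ E) *
          ∫⁻ h, fracKernel α (r • h) * translationDefect μ (r • A) (r • h) ∂μ := by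
        rw [shiftEnergy, setLIntegral_univ, lintegral_eq_mul_lintegral_comp_smul μ _ hr]
    _ = ENNReal.ofReal (r ^ finrank ℝ E) * (ENNReal.ofReal (r ^ (-((finrank ℝ E : ℝ) + α))) *
          ENNReal.ofReal (r ^ finrank ℝ E) * shiftEnergy μ α A Set.univ) := by
        have hmeas : Measurable fun h ↦ fracKernel α h * translationDefect μ A h :=
          (measurable_fracKernel α).mul (measurable_translationDefect μ hA)
        rw [shiftEnergy, setLIntegral_univ, ← lintegral_const_mul _ hmeas]
        congr! 3 with h
        rw [fracKernel_smul α hr, translationDefect_smul μ A hr, mul_mul_mul_comm]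
    _ = ENNReal.ofReal (r ^ ((finrank ℝ E : ℝ) - α)) * shiftEnergy μ α A Set.univ := by
        rw [← ENNReal.ofReal_mul (by positivity), ← mul_assoc, ← ENNReal.ofReal_mul (by positivity),
          hpow]

theorem lintegral_mul_translationDefect_le {w : E → ℝ≥0∞} (hw : Measurable w) {A : Set E}
    (hA : MeasurableSet A) :
    ∫⁻ h, w h * translationDefect μ A h ∂μ ≤
      ENNReal.ofReal (2 ^ (finrank ℝ E + 1)) *
        ∫⁻ h, w ((2 : ℝ) • h) * translationDefect μ A h ∂μ := by
  have hmeas : Measurable fun h ↦ w ((2 : ℝ) • h) * translationDefect μ A h :=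
    (hw.comp (measurable_const_smul _)).mul (measurable_translationDefect μ hA)
  have hdouble (h : E) : translationDefect μ A ((2 : ℝ) • h) ≤ 2 * translationDefect μ A h := by
    simpa only [two_smul, two_mul] using translationDefect_add_le μ A h h
  calc ∫⁻ h, w h * translationDefect μ A h ∂μ
      = ENNReal.ofReal (2 ^ finrank ℝ E) *
          ∫⁻ h, w ((2 : ℝ) • h) * translationDefect μ A ((2 : ℝ) • h) ∂μ :=
        lintegral_eq_mul_lintegral_comp_smul μ _ two_pos
    _ ≤ ENNReal.ofReal (2 ^ finrank ℝ E) *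
          ∫⁻ h, 2 * (w ((2 : ℝ) • h) * translationDefect μ A h) ∂μ := by
        gcongr _ * ?_
        refine lintegral_mono fun h ↦ ?_
        rw [mul_left_comm]
        exact mul_le_mul_right (hdouble h) _
    _ = _ := by
        rw [lintegral_const_mul _ hmeas, ← mul_assoc, pow_succ, ENNReal.ofReal_mul (by positivity),
          ENNReal.ofReal_ofNat]

theorem setLIntegral_truncKernel_add_shiftEnergy {s : ℝ} (hs : 0 < s) {t : ℝ} (hst : s ≤ t)
    {ρ c : ℝ} (hρc : ρ ≤ c) {A : Set E} (hA : MeasurableSet A) :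
    (∫⁻ h in ball 0 ρ, truncKernel t (t - s) c h * translationDefect μ A h ∂μ) +
        shiftEnergy μ s A (ball 0 ρ) =
      ENNReal.ofReal (c ^ (t - s)) * shiftEnergy μ t A (ball 0 ρ) := by
  have hdefect : Measurable (translationDefect μ A) := measurable_translationDefect μ hA
  unfold shiftEnergy
  rw [← lintegral_add_left (by fun_prop), ← lintegral_const_mul _ (by fun_prop)]
  refine setLIntegral_congr_fun measurableSet_ball fun h hh ↦ ?_
  have hhc : ‖h‖ ≤ c := (mem_ball_zero_iff.1 hh).le.trans hρc
  rw [← add_mul, truncKernel_add_fracKernel hs hst hhc, mul_assoc]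

theorem setLIntegral_truncKernel_two_mul_le {s t : ℝ} (hst : s ≤ t) {ρ : ℝ} (hρ : 0 ≤ ρ)
    {A : Set E} (hA : MeasurableSet A) :
    ∫⁻ h in ball 0 ρ, truncKernel t (t - s) (2 * ρ) h * translationDefect μ A h ∂μ ≤
      ENNReal.ofReal (2 ^ (1 - s)) *
        ∫⁻ h in ball 0 ρ, truncKernel t (t - s) ρ h * translationDefect μ A h ∂μ := by
  have hdefect : Measurable (translationDefect μ A) := measurable_translationDefect μ hA
  have hsupp : (Function.support fun h ↦ truncKernel t (t - s) ρ h * translationDefect μ A h) ⊆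
      ball 0 ρ := by
    refine Function.support_subset_iff'.2 fun h hh ↦ ?_
    rw [mem_ball_zero_iff, not_lt] at hh
    rw [truncKernel_eq_zero t (sub_nonneg.2 hst) hρ hh, zero_mul]
  have hpow : (2 : ℝ) ^ (finrank ℝ E + 1) * 2 ^ (t - s - ((finrank ℝ E : ℝ) + t)) =
      2 ^ (1 - s) := by
    rw [← Real.rpow_natCast, ← Real.rpow_add two_pos]
    push_cast
    ring_nf
  calc ∫⁻ h in ball 0 ρ, truncKernel t (t - s) (2 * ρ) h * translationDefect μ A h ∂μ
      ≤ ∫⁻ h, truncKernel t (t - s) (2 * ρ) h * translationDefect μ A h ∂μ :=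
        setLIntegral_le_lintegral _ _
    _ ≤ ENNReal.ofReal (2 ^ (finrank ℝ E + 1)) *
          ∫⁻ h, truncKernel t (t - s) (2 * ρ) ((2 : ℝ) • h) * translationDefect μ A h ∂μ :=
        lintegral_mul_translationDefect_le μ (by fun_prop) hA
    _ = ENNReal.ofReal (2 ^ (1 - s)) *
          ∫⁻ h, truncKernel t (t - s) ρ h * translationDefect μ A h ∂μ := by
        simp_rw [truncKernel_smul t (t - s) hρ two_pos, mul_assoc]
        rw [lintegral_const_mul _ (by fun_prop), ← mul_assoc,
          ← ENNReal.ofReal_mul (by positivity), hpow]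
    _ = _ := by rw [setLIntegral_eq_of_support_subset hsupp]

theorem two_rpow_mul_shiftEnergy_ball_le {s : ℝ} (hs : 0 < s) {t : ℝ} (hst : s ≤ t) {ρ : ℝ}
    (hρ : 0 ≤ ρ) {A : Set E} (hA : MeasurableSet A) (hfin : shiftEnergy μ t A (ball 0 ρ) ≠ ⊤) :
    (2 ^ (1 - s) - 1) * (shiftEnergy μ s A (ball 0 ρ)).toReal ≤
      (2 ^ (1 - t) - 1) * (2 * ρ) ^ (t - s) * (shiftEnergy μ t A (ball 0 ρ)).toReal := by
  have hwide := setLIntegral_truncKernel_add_shiftEnergy μ hs hst (by linarith : ρ ≤ 2 * ρ) hA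
  have hnarrow := setLIntegral_truncKernel_add_shiftEnergy μ hs hst le_rfl hA (ρ := ρ)
  have hle := setLIntegral_truncKernel_two_mul_le μ hst hρ hA
  set wide := ∫⁻ h in ball 0 ρ, truncKernel t (t - s) (2 * ρ) h * translationDefect μ A h ∂μ
  set narrow := ∫⁻ h in ball 0 ρ, truncKernel t (t - s) ρ h * translationDefect μ A h ∂μ
  obtain ⟨hwide_fin, hs_fin⟩ := ENNReal.add_ne_top.1
    (hwide.trans_ne (ENNReal.mul_ne_top ENNReal.ofReal_ne_top hfin))
  obtain ⟨hnarrow_fin, -⟩ := ENNReal.add_ne_top.1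
    (hnarrow.trans_ne (ENNReal.mul_ne_top ENNReal.ofReal_ne_top hfin))
  apply_fun ENNReal.toReal at hwide hnarrow
  rw [ENNReal.toReal_add hwide_fin hs_fin, ENNReal.toReal_mul,
    ENNReal.toReal_ofReal (by positivity)] at hwide
  rw [ENNReal.toReal_add hnarrow_fin hs_fin, ENNReal.toReal_mul,
    ENNReal.toReal_ofReal (by positivity)] at hnarrow
  have hle' : wide.toReal ≤ 2 ^ (1 - s) * narrow.toReal := by
    simpa [ENNReal.toReal_ofReal (by positivity : (0 : ℝ) ≤ 2 ^ (1 - s))] using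
      ENNReal.toReal_mono (ENNReal.mul_ne_top ENNReal.ofReal_ne_top hnarrow_fin) hle
  have hpow : (2 : ℝ) ^ (1 - s) * ρ ^ (t - s) = 2 ^ (1 - t) * (2 * ρ) ^ (t - s) := by
    rw [Real.mul_rpow two_pos.le hρ, ← mul_assoc, ← Real.rpow_add two_pos]
    ring_nf
  rw [eq_sub_of_add_eq hwide, eq_sub_of_add_eq hnarrow, mul_sub, ← mul_assoc, hpow] at hle'
  linarith

theorem two_rpow_sub_one_le_self {x : ℝ} (hx0 : 0 ≤ x) (hx1 : x ≤ 1) : (2 : ℝ) ^ x - 1 ≤ x := by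
  have := rpow_one_add_le_one_add_mul_self (s := 1) (by norm_num) hx0 hx1
  norm_num at this
  linarith

theorem half_le_two_rpow_sub_one {x : ℝ} (hx : 0 ≤ x) : x / 2 ≤ (2 : ℝ) ^ x - 1 := by
  have hexp := Real.add_one_le_exp (Real.log 2 * x)
  rw [← Real.rpow_def_of_pos two_pos] at hexp
  nlinarith [Real.log_two_gt_d9]

/-- The radius `ρ` with `(2ρ)^δ = δ / 2` at which the energies are split into a near part and a
far part. -/
noncomputable def cutoffRadius (δ : ℝ) : ℝ := (δ / 2) ^ δ⁻¹ / 2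

theorem cutoffRadius_pos {δ : ℝ} (hδ : 0 < δ) : 0 < cutoffRadius δ := by
  unfold cutoffRadius; positivity

theorem two_mul_cutoffRadius_rpow {δ : ℝ} (hδ : 0 < δ) : (2 * cutoffRadius δ) ^ δ = δ / 2 := by
  rw [cutoffRadius, mul_div_cancel₀ _ two_ne_zero, Real.rpow_inv_rpow (by positivity) hδ.ne']

theorem two_mul_cutoffRadius_le_one {δ : ℝ} (hδ : 0 < δ) (hδ2 : δ ≤ 2) :
    2 * cutoffRadius δ ≤ 1 := by
  rw [cutoffRadius, mul_div_cancel₀ _ two_ne_zero]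
  exact Real.rpow_le_one (by positivity) (by linarith) (by positivity)

theorem shiftEnergy_ball_cutoffRadius_le {s : ℝ} (hs : 0 < s) {t : ℝ} (ht : t ≤ 1) {δ : ℝ}
    (hδ : 0 < δ) (hδst : δ ≤ t - s) {A : Set E} (hA : MeasurableSet A)
    (hfin : shiftEnergy μ t A (ball 0 (cutoffRadius δ)) ≠ ⊤) :
    (shiftEnergy μ s A (ball 0 (cutoffRadius δ))).toReal ≤
      (1 - t) * (shiftEnergy μ t A (ball 0 (cutoffRadius δ))).toReal := by
  have hρ := cutoffRadius_pos hδ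
  have hpow : (2 * cutoffRadius δ) ^ (t - s) ≤ δ / 2 :=
    two_mul_cutoffRadius_rpow hδ ▸ Real.rpow_le_rpow_of_exponent_ge (by positivity)
      (two_mul_cutoffRadius_le_one hδ (by linarith)) hδst
  have hcompare := two_rpow_mul_shiftEnergy_ball_le μ hs (by linarith) hρ.le hA hfin
  set Is := (shiftEnergy μ s A (ball 0 (cutoffRadius δ))).toReal
  set It := (shiftEnergy μ t A (ball 0 (cutoffRadius δ))).toReal
  have : 0 ≤ Is := ENNReal.toReal_nonneg
  have : 0 ≤ It := ENNReal.toReal_nonneg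
  have ht0 : 0 ≤ 1 - t := by linarith
  have hlow : δ / 2 ≤ 2 ^ (1 - s) - 1 := by
    linarith [half_le_two_rpow_sub_one (x := 1 - s) (by linarith)]
  have hup : (2 : ℝ) ^ (1 - t) - 1 ≤ 1 - t := two_rpow_sub_one_le_self ht0 (by linarith)
  refine le_of_mul_le_mul_left ?_ (half_pos hδ)
  calc δ / 2 * Is ≤ (2 ^ (1 - s) - 1) * Is := by gcongr
    _ ≤ (2 ^ (1 - t) - 1) * (2 * cutoffRadius δ) ^ (t - s) * It := hcompare
    _ ≤ (1 - t) * (δ / 2) * It := by gcongr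
    _ = δ / 2 * ((1 - t) * It) := by ring

theorem pow_sub_one_mul_rpow_neg_add {n : ℕ} (hn : 0 < n) {α y : ℝ} (hy : 0 < y) :
    y ^ (n - 1) * y ^ (-((n : ℝ) + α)) = y ^ (-α - 1) := by
  rw [← Real.rpow_natCast, ← Real.rpow_add hy, Nat.cast_pred hn]
  ring_nf

theorem setLIntegral_compl_ball_fracKernel [Nontrivial E] {α : ℝ} (hα : 0 < α) {r : ℝ}
    (hr : 0 < r) :
    ∫⁻ h in (ball 0 r)ᶜ, fracKernel α h ∂μ =
      ENNReal.ofReal (finrank ℝ E * μ.real (ball 0 1) * (r ^ (-α) / α)) := by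
  set profile : ℝ → ℝ := (Set.Ici r).indicator fun y ↦ y ^ (-((finrank ℝ E : ℝ) + α))
  have hprofile_nonneg (h : E) : 0 ≤ profile ‖h‖ :=
    Set.indicator_nonneg (fun y hy ↦ Real.rpow_nonneg (hr.le.trans hy) _) _
  have hkernel (h : E) : (ball 0 r)ᶜ.indicator (fracKernel α) h = ENNReal.ofReal (profile ‖h‖) := by
    by_cases hh : r ≤ ‖h‖ <;> simp [profile, fracKernel, hh]
  have hradial : Set.EqOn (fun y ↦ y ^ (finrank ℝ E - 1) • profile y)
      ((Set.Ici r).indicator fun y ↦ y ^ (-α - 1)) (Set.Ioi 0) := by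
    intro y hy
    by_cases hry : r ≤ y
    · simp only [profile, Set.indicator_of_mem (Set.mem_Ici.2 hry), smul_eq_mul,
        pow_sub_one_mul_rpow_neg_add finrank_pos hy]
    · simp [profile, hry]
  have hinter : Set.Ici r ∩ Set.Ioi 0 = Set.Ici r :=
    Set.inter_eq_left.2 fun y hy ↦ hr.trans_le hy
  have hintegrable : Integrable (fun h : E ↦ profile ‖h‖) μ := by
    rw [integrable_fun_norm_addHaar, integrableOn_congr_fun hradial measurableSet_Ioi,
      IntegrableOn, integrable_indicator_iff measurableSet_Ici, IntegrableOn,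
      Measure.restrict_restrict measurableSet_Ici, hinter, ← IntegrableOn,
      integrableOn_Ici_iff_integrableOn_Ioi]
    exact integrableOn_Ioi_rpow_of_lt (by linarith) hr
  rw [← lintegral_indicator measurableSet_ball.compl]
  simp_rw [hkernel]
  rw [← ofReal_integral_eq_lintegral_ofReal hintegrable (.of_forall hprofile_nonneg),
    integral_fun_norm_addHaar, setIntegral_congr_fun measurableSet_Ioi hradial,
    setIntegral_indicator measurableSet_Ici, Set.inter_comm, hinter, integral_Ici_eq_integral_Ioi,
    integral_Ioi_rpow_of_lt (by linarith) hr, nsmul_eq_mul, smul_eq_mul, sub_add_cancel,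
    neg_div_neg_eq, mul_assoc]

theorem shiftEnergy_compl_ball_le [Nontrivial E] {α : ℝ} (hα : 0 < α) {r : ℝ} (hr : 0 < r)
    (A : Set E) :
    shiftEnergy μ α A (ball 0 r)ᶜ ≤
      ENNReal.ofReal (finrank ℝ E * μ.real (ball 0 1) * (r ^ (-α) / α)) * μ A := by
  rw [← setLIntegral_compl_ball_fracKernel μ hα hr, ← lintegral_mul_const _ (by fun_prop)]
  exact lintegral_mono fun h ↦ mul_le_mul_right (translationDefect_le_measure μ A h) _

theorem shiftEnergy_compl_ball_ne_top [Nontrivial E] {α : ℝ} (hα : 0 < α) {r : ℝ} (hr : 0 < r)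
    {A : Set E} (hA : μ A ≠ ⊤) : shiftEnergy μ α A (ball 0 r)ᶜ ≠ ⊤ :=
  ne_top_of_le_ne_top (ENNReal.mul_ne_top ENNReal.ofReal_ne_top hA)
    (shiftEnergy_compl_ball_le μ hα hr A)

theorem mul_shiftEnergy_compl_ball_le [Nontrivial E] {s : ℝ} (hs : 0 < s) (hs1 : s ≤ 1) {r : ℝ}
    (hr : 0 < r) (hr1 : r ≤ 1) {A : Set E} (hA : μ A ≠ ⊤) :
    s * (shiftEnergy μ s A (ball 0 r)ᶜ).toReal ≤
      finrank ℝ E * μ.real (ball 0 1) / r * μ.real A := by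
  have hpow : r ^ (-s) ≤ r⁻¹ := by
    rw [← Real.rpow_neg_one]
    exact Real.rpow_le_rpow_of_exponent_ge hr hr1 (by linarith)
  have hle := ENNReal.toReal_mono (ENNReal.mul_ne_top ENNReal.ofReal_ne_top hA)
    (shiftEnergy_compl_ball_le μ hs hr A)
  rw [ENNReal.toReal_mul, ENNReal.toReal_ofReal (by positivity)] at hle
  calc s * (shiftEnergy μ s A (ball 0 r)ᶜ).toReal
      ≤ s * (finrank ℝ E * μ.real (ball 0 1) * (r ^ (-s) / s) * μ.real A) := by gcongr; exact hle
    _ = finrank ℝ E * μ.real (ball 0 1) * r ^ (-s) * μ.real A := by field_simp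
    _ ≤ finrank ℝ E * μ.real (ball 0 1) / r * μ.real A := by rw [div_eq_mul_inv]; gcongr

theorem mul_shiftEnergy_univ_le [Nontrivial E] {s : ℝ} (hs : 0 < s) {t : ℝ} (ht : t ≤ 1) {δ : ℝ}
    (hδ : 0 < δ) (hδst : δ ≤ t - s) {A : Set E} (hA : MeasurableSet A) (hμA : μ A ≠ ⊤)
    (hfin : shiftEnergy μ t A Set.univ ≠ ⊤) :
    s * (shiftEnergy μ s A Set.univ).toReal ≤
      (1 - t) * (shiftEnergy μ t A Set.univ).toReal +
        finrank ℝ E * μ.real (ball 0 1) / cutoffRadius δ * μ.real A := by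
  have hρ := cutoffRadius_pos hδ
  have hρ1 : cutoffRadius δ ≤ 1 := by linarith [two_mul_cutoffRadius_le_one hδ (by linarith)]
  have hmono := shiftEnergy_mono_set μ t A (Set.subset_univ (ball 0 (cutoffRadius δ)))
  have hnear := shiftEnergy_ball_cutoffRadius_le μ hs ht hδ hδst hA (ne_top_of_le_ne_top hfin hmono)
  have hfar := mul_shiftEnergy_compl_ball_le μ hs (by linarith) hρ hρ1 hμA
  calc s * (shiftEnergy μ s A Set.univ).toReal
      ≤ s * ((shiftEnergy μ s A (ball 0 (cutoffRadius δ))).toReal +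
          (shiftEnergy μ s A (ball 0 (cutoffRadius δ))ᶜ).toReal) := by
        rw [← shiftEnergy_add_compl μ s A (S := ball 0 (cutoffRadius δ)) measurableSet_ball]
        gcongr
        exact ENNReal.toReal_add_le
    _ ≤ (shiftEnergy μ s A (ball 0 (cutoffRadius δ))).toReal +
          s * (shiftEnergy μ s A (ball 0 (cutoffRadius δ))ᶜ).toReal := by
        rw [mul_add]
        gcongr
        exact mul_le_of_le_one_left ENNReal.toReal_nonneg (by linarith)
    _ ≤ (1 - t) * (shiftEnergy μ t A Set.univ).toReal +
          finrank ℝ E * μ.real (ball 0 1) / cutoffRadius δ * μ.real A := by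
        have : 0 ≤ 1 - t := by linarith
        exact add_le_add (hnear.trans (by gcongr)) hfar

theorem shiftEnergy_univ_ne_zero_of_subset_ball [Nontrivial E] {α : ℝ} (hα : 0 < α) {r : ℝ}
    (hr : 0 < r) {A : Set E} (hA : A ⊆ ball 0 r) (hμA : μ A ≠ 0) :
    shiftEnergy μ α A Set.univ ≠ 0 := by
  have hfar : shiftEnergy μ α A (ball 0 (2 * r))ᶜ =
      (∫⁻ h in (ball 0 (2 * r))ᶜ, fracKernel α h ∂μ) * μ A := by
    rw [← lintegral_mul_const _ (by fun_prop)]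
    refine setLIntegral_congr_fun measurableSet_ball.compl fun h hh ↦ ?_
    have hh' : 2 * r ≤ ‖h‖ := by simpa using hh
    rw [translationDefect_eq_measure_of_subset_ball μ hA hh']
  have hball : 0 < μ.real (ball 0 1) :=
    ENNReal.toReal_pos (measure_ball_pos μ 0 one_pos).ne' measure_ball_lt_top.ne
  have hd : (0 : ℝ) < finrank ℝ E := Nat.cast_pos.2 finrank_pos
  refine (lt_of_lt_of_le ?_ (shiftEnergy_mono_set μ α A (Set.subset_univ (ball 0 (2 * r))ᶜ))).ne'
  rw [hfar, setLIntegral_compl_ball_fracKernel μ hα (by positivity)]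
  exact ENNReal.mul_pos (ENNReal.ofReal_pos.2 (by positivity)).ne' hμA

theorem translationDefect_unitBall_le [Nontrivial E] (h : E) :
    translationDefect μ (ball 0 1) h ≤ ENNReal.ofReal (finrank ℝ E * ‖h‖) * μ (ball 0 1) := by
  rcases le_total 1 ‖h‖ with hh | hh
  · have hd : (1 : ℝ) ≤ finrank ℝ E := Nat.one_le_cast.2 finrank_pos
    calc translationDefect μ (ball 0 1) h ≤ 1 * μ (ball 0 1) := by
          rw [one_mul]
          exact translationDefect_le_measure μ _ h
      _ ≤ _ := by
          gcongr
          exact ENNReal.one_le_ofReal.2 (one_le_mul_of_one_le_of_one_le hd hh)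
  · have hsub : ball (0 : E) 1 \ (· + h) ⁻¹' ball 0 1 ⊆ ball 0 1 \ ball 0 (1 - ‖h‖) := by
      refine Set.sdiff_subset_sdiff_right fun x hx ↦ ?_
      simp only [Set.mem_preimage, mem_ball_zero_iff] at hx ⊢
      linarith [norm_add_le x h]
    have hbernoulli : 1 - (1 - ‖h‖) ^ finrank ℝ E ≤ finrank ℝ E * ‖h‖ := by
      have := one_add_mul_le_pow (a := -‖h‖) (by linarith) (finrank ℝ E)
      rw [← sub_eq_add_neg] at this
      linarith
    calc translationDefect μ (ball 0 1) h ≤ μ (ball 0 1 \ ball 0 (1 - ‖h‖)) := measure_mono hsub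
      _ = ENNReal.ofReal (1 - (1 - ‖h‖) ^ finrank ℝ E) * μ (ball 0 1) := by
          rw [measure_sdiff (ball_subset_ball (sub_le_self 1 (norm_nonneg h)))
            measurableSet_ball.nullMeasurableSet measure_ball_lt_top.ne,
            Measure.addHaar_ball μ 0 (sub_nonneg.2 hh),
            ENNReal.ofReal_sub _ (pow_nonneg (sub_nonneg.2 hh) _), ENNReal.ofReal_one,
            ENNReal.sub_mul fun _ _ ↦ measure_ball_lt_top.ne, one_mul]
      _ ≤ _ := by gcongr

theorem setLIntegral_ball_fracKernel_ne_top [Nontrivial E] {α : ℝ} (hα : α < 0) (r : ℝ) :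
    ∫⁻ h in ball 0 r, fracKernel α h ∂μ ≠ ⊤ := by
  have hint : IntegrableOn (fun h : E ↦ ‖h‖ ^ (-((finrank ℝ E : ℝ) + α))) (ball 0 r) μ :=
    integrableOn_ball_of_norm_le_rpow (C := 1) (α := finrank ℝ E + α) finrank_pos
      (by linarith)
      (.of_forall fun h ↦ by rw [Real.norm_of_nonneg (by positivity), one_mul])
      (Measurable.aestronglyMeasurable (by fun_prop))
  exact hint.lintegral_lt_top.ne

theorem shiftEnergy_unitBall_univ_ne_top [Nontrivial E] {α : ℝ} (hα : 0 < α) (hα1 : α < 1) :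
    shiftEnergy μ α (ball 0 1) Set.univ ≠ ⊤ := by
  rw [← shiftEnergy_add_compl μ α _ (measurableSet_ball (x := 0) (ε := 1))]
  refine ENNReal.add_ne_top.2
    ⟨?_, shiftEnergy_compl_ball_ne_top μ hα one_pos measure_ball_lt_top.ne⟩
  have hd : (1 : ℝ) ≤ finrank ℝ E := Nat.one_le_cast.2 finrank_pos
  have hnear : shiftEnergy μ α (ball 0 1) (ball 0 1) ≤
      ENNReal.ofReal (finrank ℝ E) * μ (ball 0 1) *
        ∫⁻ h in ball 0 1, fracKernel (α - 1) h ∂μ := by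
    rw [← lintegral_const_mul _ (by fun_prop)]
    refine lintegral_mono fun h ↦ ?_
    calc fracKernel α h * translationDefect μ (ball 0 1) h
        ≤ fracKernel α h * (ENNReal.ofReal (finrank ℝ E * ‖h‖) * μ (ball 0 1)) := by
          gcongr
          exact translationDefect_unitBall_le μ h
      _ = ENNReal.ofReal (finrank ℝ E) * μ (ball 0 1) * fracKernel (α - 1) h := by
          rw [fracKernel_eq_rpow_norm_mul (s := α - 1) (t := α) (by linarith) (by linarith),
            sub_sub_self, Real.rpow_one, ENNReal.ofReal_mul (by positivity)]
          ring
  exact ne_top_of_le_ne_top (ENNReal.mul_ne_top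
    (ENNReal.mul_ne_top ENNReal.ofReal_ne_top measure_ball_lt_top.ne)
    (setLIntegral_ball_fracKernel_ne_top μ (by linarith) 1)) hnear

end ShiftEnergy

section FracPer

open Metric

variable {N : ℕ}

theorem fracPer_eq_shiftEnergy_univ (α : ℝ) {A : Set (EuclideanSpace ℝ (Fin N))}
    (hA : MeasurableSet A) : fracPer N α A = shiftEnergy volume α A Set.univ := by
  rw [shiftEnergy, setLIntegral_univ,
    ← setLIntegral_compl_sub_eq_lintegral_mul_translationDefect volume (by fun_prop) hA]
  simp_rw [fracPer, interEnergy, fracKernel, finrank_euclideanSpace_fin, neg_add_eq_sub,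
    norm_sub_rev]

theorem fracPer_unitBall_ne_top [NeZero N] {α : ℝ} (hα : 0 < α) (hα1 : α < 1) :
    fracPer N α (ball 0 1) ≠ ⊤ := by
  rw [fracPer_eq_shiftEnergy_univ α measurableSet_ball]
  exact shiftEnergy_unitBall_univ_ne_top volume hα hα1

theorem fracPer_unitBall_ne_zero [NeZero N] {α : ℝ} (hα : 0 < α) : fracPer N α (ball 0 1) ≠ 0 := by
  rw [fracPer_eq_shiftEnergy_univ α measurableSet_ball]
  exact shiftEnergy_univ_ne_zero_of_subset_ball volume hα one_pos subset_rfl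
    (measure_ball_pos _ _ one_pos).ne'

theorem fracPer_ball (α : ℝ) {r : ℝ} (hr : 0 < r) :
    fracPer N α (ball 0 r) = ENNReal.ofReal (r ^ ((N : ℝ) - α)) * fracPer N α (ball 0 1) := by
  rw [fracPer_eq_shiftEnergy_univ α measurableSet_ball,
    fracPer_eq_shiftEnergy_univ α measurableSet_ball, ← smul_unitBall_of_pos hr,
    shiftEnergy_smul_univ volume α measurableSet_ball hr, finrank_euclideanSpace_fin]

theorem neg_mul_measureReal_le_freeEnergy [NeZero N] {s : ℝ} (hs : 0 < s) {t : ℝ} (ht : t ≤ 1)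
    {δ : ℝ} (hδ : 0 < δ) (hδst : δ ≤ t - s) {A : Set (EuclideanSpace ℝ (Fin N))}
    (hA : MeasurableSet A) (hvol : volume A ≠ ⊤) (hfin : fracPer N t A ≠ ⊤) :
    -(N * volume.real (ball (0 : EuclideanSpace ℝ (Fin N)) 1) / cutoffRadius δ) * volume.real A ≤
      freeEnergy N s t A := by
  rw [fracPer_eq_shiftEnergy_univ t hA] at hfin
  have hle := mul_shiftEnergy_univ_le volume hs ht hδ hδst hA hvol hfin
  rw [finrank_euclideanSpace_fin] at hle
  rw [freeEnergy, fracPer_eq_shiftEnergy_univ t hA, fracPer_eq_shiftEnergy_univ s hA]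
  linarith

end FracPer

section IsoFn

open Metric

variable {N : ℕ} {t m : ℝ}

/-- The sets over which the infimum in `isoFn N s t m` is taken. -/
structure IsCompetitor (N : ℕ) (t m : ℝ) (A : Set (EuclideanSpace ℝ (Fin N))) : Prop where
  measurableSet : MeasurableSet A
  volume_eq : volume A = ENNReal.ofReal m
  fracPer_lt_top : fracPer N t A < ⊤

theorem le_isoFn {s a : ℝ} (hne : ∃ A, IsCompetitor N t m A)
    (ha : ∀ A, IsCompetitor N t m A → a ≤ freeEnergy N s t A) : a ≤ isoFn N s t m := by
  obtain ⟨A, hA⟩ := hne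
  refine le_csInf ⟨_, A, hA.measurableSet, hA.volume_eq, hA.fracPer_lt_top, rfl⟩ ?_
  rintro _ ⟨B, hB, hvol, hper, rfl⟩
  exact ha B ⟨hB, hvol, hper⟩

theorem isoFn_le_freeEnergy {s a : ℝ} (ha : ∀ A, IsCompetitor N t m A → a ≤ freeEnergy N s t A)
    {A : Set (EuclideanSpace ℝ (Fin N))} (hA : IsCompetitor N t m A) :
    isoFn N s t m ≤ freeEnergy N s t A := by
  refine csInf_le ⟨a, ?_⟩ ⟨A, hA.measurableSet, hA.volume_eq, hA.fracPer_lt_top, rfl⟩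
  rintro _ ⟨B, hB, hvol, hper, rfl⟩
  exact ha B ⟨hB, hvol, hper⟩

/-- The radius of the balls of volume `m` in `ℝ^N`. -/
noncomputable def volumeRadius (N : ℕ) (m : ℝ) : ℝ :=
  (m / volume.real (ball (0 : EuclideanSpace ℝ (Fin N)) 1)) ^ (N : ℝ)⁻¹

theorem volumeReal_unitBall_pos : 0 < volume.real (ball (0 : EuclideanSpace ℝ (Fin N)) 1) :=
  ENNReal.toReal_pos (measure_ball_pos _ _ one_pos).ne' measure_ball_lt_top.ne

theorem volumeRadius_pos (hm : 0 < m) : 0 < volumeRadius N m :=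
  Real.rpow_pos_of_pos (div_pos hm volumeReal_unitBall_pos) _

theorem volumeRadius_rpow (hm : 0 ≤ m) (a : ℝ) :
    volumeRadius N m ^ a =
      m ^ (a / N) / volume.real (ball (0 : EuclideanSpace ℝ (Fin N)) 1) ^ (a / N) := by
  rw [volumeRadius, ← Real.rpow_mul (div_nonneg hm measureReal_nonneg),
    Real.div_rpow hm measureReal_nonneg, inv_mul_eq_div]

theorem volume_ball_volumeRadius [NeZero N] (hm : 0 < m) :
    volume (ball (0 : EuclideanSpace ℝ (Fin N)) (volumeRadius N m)) = ENNReal.ofReal m := by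
  have hpow : volumeRadius N m ^ N * volume.real (ball (0 : EuclideanSpace ℝ (Fin N)) 1) = m := by
    rw [volumeRadius, Real.rpow_inv_natCast_pow (div_nonneg hm.le measureReal_nonneg)
      (NeZero.ne N), div_mul_cancel₀ _ volumeReal_unitBall_pos.ne']
  rw [Measure.addHaar_ball_of_pos _ _ (volumeRadius_pos hm), finrank_euclideanSpace_fin,
    ← ofReal_measureReal measure_ball_lt_top.ne,
    ← ENNReal.ofReal_mul (pow_nonneg (volumeRadius_pos hm).le N), hpow]

theorem isCompetitor_ball_volumeRadius [NeZero N] (ht0 : 0 < t) (ht1 : t < 1) (hm : 0 < m) :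
    IsCompetitor N t m (ball 0 (volumeRadius N m)) where
  measurableSet := measurableSet_ball
  volume_eq := volume_ball_volumeRadius hm
  fracPer_lt_top := by
    rw [fracPer_ball t (volumeRadius_pos hm)]
    exact ENNReal.mul_lt_top ENNReal.ofReal_lt_top (fracPer_unitBall_ne_top ht0 ht1).lt_top

theorem toReal_fracPer_ball_volumeRadius (α : ℝ) (hm : 0 < m) :
    (fracPer N α (ball 0 (volumeRadius N m))).toReal =
      (fracPer N α (ball 0 1)).toReal /
        volume.real (ball (0 : EuclideanSpace ℝ (Fin N)) 1) ^ (((N : ℝ) - α) / N) *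
        m ^ (((N : ℝ) - α) / N) := by
  have hr : 0 < volumeRadius N m := volumeRadius_pos hm
  rw [fracPer_ball α hr, ENNReal.toReal_mul, ENNReal.toReal_ofReal (by positivity),
    volumeRadius_rpow hm.le]
  ring

theorem freeEnergy_ball_volumeRadius [NeZero N] (s : ℝ) (ht0 : 0 < t) (ht1 : t < 1) (hm : 0 < m) :
    freeEnergy N s t (ball 0 (volumeRadius N m)) =
      ((1 - t) * (fracPer N t (ball 0 1)).toReal /
          volume.real (ball (0 : EuclideanSpace ℝ (Fin N)) 1) ^ (((N : ℝ) - t) / N)) *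
        m ^ (((N : ℝ) - t) / N) *
        (1 - (s * (fracPer N s (ball 0 1)).toReal /
              volume.real (ball (0 : EuclideanSpace ℝ (Fin N)) 1) ^ (((N : ℝ) - s) / N)) /
            ((1 - t) * (fracPer N t (ball 0 1)).toReal /
              volume.real (ball (0 : EuclideanSpace ℝ (Fin N)) 1) ^ (((N : ℝ) - t) / N)) *
            m ^ ((t - s) / N)) := by
  have hPt : 0 < (fracPer N t (ball 0 1)).toReal :=
    ENNReal.toReal_pos (fracPer_unitBall_ne_zero ht0) (fracPer_unitBall_ne_top ht0 ht1)
  have hω : 0 < volume.real (ball (0 : EuclideanSpace ℝ (Fin N)) 1) := volumeReal_unitBall_pos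
  have hc₁ : (1 - t) * (fracPer N t (ball 0 1)).toReal /
      volume.real (ball (0 : EuclideanSpace ℝ (Fin N)) 1) ^ (((N : ℝ) - t) / N) ≠ 0 :=
    div_ne_zero (mul_pos (sub_pos.2 ht1) hPt).ne' (Real.rpow_pos_of_pos hω _).ne'
  have hm_split : m ^ (((N : ℝ) - s) / N) = m ^ (((N : ℝ) - t) / N) * m ^ ((t - s) / N) := by
    rw [← Real.rpow_add hm, ← add_div, sub_add_sub_cancel]
  rw [freeEnergy, toReal_fracPer_ball_volumeRadius t hm, toReal_fracPer_ball_volumeRadius s hm,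
    hm_split, ← mul_assoc, ← mul_assoc s, ← mul_div_assoc, ← mul_div_assoc]
  set c₁ := (1 - t) * (fracPer N t (ball 0 1)).toReal /
    volume.real (ball (0 : EuclideanSpace ℝ (Fin N)) 1) ^ (((N : ℝ) - t) / N)
  rw [mul_sub, mul_one, ← mul_assoc (c₁ * _), mul_right_comm c₁, mul_div_cancel₀ _ hc₁]
  ring

end IsoFn

theorem stmt6 (N : ℕ) (hN : 0 < N) (δ₀ : ℝ) (hδ : δ₀ ∈ Set.Ioo (0 : ℝ) 1) :
    ∃ c₀ : ℝ, 0 < c₀ ∧ ∀ s t : ℝ, 0 < s → s < t → t < 1 → δ₀ ≤ t - s →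
      ∀ m : ℝ, 0 < m →
        -c₀ * m ≤ isoFn N s t m ∧
        isoFn N s t m ≤
          ((1 - t) * (fracPer N t (Metric.ball (0 : EuclideanSpace ℝ (Fin N)) 1)).toReal /
              (volume (Metric.ball (0 : EuclideanSpace ℝ (Fin N)) 1)).toReal ^
                (((N : ℝ) - t) / N)) *
            m ^ (((N : ℝ) - t) / N) *
            (1 -
              (s * (fracPer N s (Metric.ball (0 : EuclideanSpace ℝ (Fin N)) 1)).toReal /
                  (volume (Metric.ball (0 : EuclideanSpace ℝ (Fin N)) 1)).toReal ^
                    (((N : ℝ) - s) / N)) /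
                ((1 - t) * (fracPer N t (Metric.ball (0 : EuclideanSpace ℝ (Fin N)) 1)).toReal /
                  (volume (Metric.ball (0 : EuclideanSpace ℝ (Fin N)) 1)).toReal ^
                    (((N : ℝ) - t) / N)) *
                m ^ ((t - s) / N)) := by
  have : NeZero N := ⟨hN.ne'⟩
  have hω : 0 < volume.real (Metric.ball (0 : EuclideanSpace ℝ (Fin N)) 1) :=
    volumeReal_unitBall_pos
  refine ⟨N * volume.real (Metric.ball (0 : EuclideanSpace ℝ (Fin N)) 1) / cutoffRadius δ₀,
    div_pos (by positivity) (cutoffRadius_pos hδ.1), fun s t hs hst ht hδst m hm ↦ ?_⟩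
  have hlower (A : Set (EuclideanSpace ℝ (Fin N))) (hA : IsCompetitor N t m A) :
      -(N * volume.real (Metric.ball (0 : EuclideanSpace ℝ (Fin N)) 1) / cutoffRadius δ₀) * m ≤
        freeEnergy N s t A := by
    have hvol : volume.real A = m := by
      rw [measureReal_def, hA.volume_eq, ENNReal.toReal_ofReal hm.le]
    simpa only [hvol] using neg_mul_measureReal_le_freeEnergy hs ht.le hδ.1 hδst hA.measurableSet
      (hA.volume_eq.trans_ne ENNReal.ofReal_ne_top) hA.fracPer_lt_top.ne
  have hball := isCompetitor_ball_volumeRadius (N := N) (hs.trans hst) ht hm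
  exact ⟨le_isoFn ⟨_, hball⟩ hlower, (isoFn_le_freeEnergy hlower hball).trans_eq
    (freeEnergy_ball_volumeRadius s (hs.trans hst) ht hm)⟩
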